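/- Resolvent Formula: Let V be a finite nonempty index set and A an irreducible Metzler real matrix indexed by V with A_{σ,σ} ≤ 0 for all σ, admitting a Perron root λ* (λ* is an eigenvalue of A and every complex eigenvalue of A has real part at most λ*). For α > 0 and σ ∈ V, let f(α)_{σ→σ} ∈ [0,∞] be the tsum, over all excursions σ = σ₁, …, σ_ℓ = σ (ℓ ≥ 2, σ_i ≠ σ for 1 < i < ℓ), of ∏_{i=1}^{ℓ−1} A_{σ_{i+1},σ_i}/(α − A_{σ_i,σ_i}). Then for every α > 0: λ* ≥ α if and only if there exists σ ∈ V with f(α)_{σ→σ} ≥ 1, if and only if f(α)_{σ→σ} ≥ 1 for every σ ∈ V. -/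

import Mathlib

open scoped ENNReal

/-- The weight of a finite path, as the product (in `[0,∞]`) of the
`ENNReal.ofReal`-weights of its consecutive pairs. The empty product is `1`. -/
noncomputable def pathWeight {V : Type*} (w : V → V → ℝ) : List V → ℝ≥0∞
  | [] => 1
  | [_] => 1
  | a :: b :: l => ENNReal.ofReal (w a b) * pathWeight w (b :: l)

/-- `l` is an excursion from `σ` to `σ`: a walk of length `≥ 2` starting and
ending at `σ` whose intermediate vertices are all different from `σ`. -/
def IsExcursion {V : Type*} (σ : V) (l : List V) : Prop :=
  2 ≤ l.length ∧ l.head? = some σ ∧ l.getLast? = some σ ∧ ∀ x ∈ l.tail.dropLast, x ≠ σ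

/-- The total weight `f(α)_{σ→σ}` of all excursions from `σ` to `σ`, with
transition weights `w(α)_{x→y} = A_{y,x}/(α − A_{x,x})`. -/
noncomputable def excursionWeight {V : Type*} (A : Matrix V V ℝ) (α : ℝ) (σ : V) : ℝ≥0∞ :=
  ∑' l : {l : List V // IsExcursion σ l},
    pathWeight (fun x y => A y x / (α - A x x)) l.1

/-- A complex number `μ` is an eigenvalue of the real matrix `M`
(via its complexification). -/
def Matrix.IsComplexEigenvalue {V : Type*} [Fintype V] (M : Matrix V V ℝ) (μ : ℂ) : Prop :=
  ∃ v : V → ℂ, v ≠ 0 ∧ (M.map (Complex.ofReal)).mulVec v = μ • v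

/-- `lam` is the Perron root (Lyapunov exponent) of `A`. -/
def Matrix.IsPerronRoot {V : Type*} [Fintype V] (A : Matrix V V ℝ) (lam : ℝ) : Prop :=
  (∃ v : V → ℝ, v ≠ 0 ∧ A.mulVec v = lam • v) ∧
  ∀ μ : ℂ, A.IsComplexEigenvalue μ → μ.re ≤ lam

/-- `A` is a Metzler matrix: all off-diagonal entries are nonnegative. -/
def Matrix.IsMetzler {V : Type*} (A : Matrix V V ℝ) : Prop :=
  ∀ σ σ' : V, σ ≠ σ' → 0 ≤ A σ' σ

/-- `A` is irreducible: any two distinct indices are connected by a chain of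
strictly positive transition entries. -/
def Matrix.IsIrreducibleMetzlerChain {V : Type*} (A : Matrix V V ℝ) : Prop :=
  ∀ σ σ' : V, σ ≠ σ' → Relation.TransGen (fun x y => x ≠ y ∧ 0 < A y x) σ σ'

/-
Fix a positive row vector `h`. Dividing the off-diagonal part of `h ᵥ* A ≤ α • h` by `α - A x x`
turns this inequality into superharmonicity of `h` for the transition weights, so both sides of the
formula are about positive `h` with `h ᵥ* A < α • h`.

* Such an `h` dominates the weight of the paths that stop at `σ`; if the inequality is strict at
  `σ`, the excursion weight there is below `1`. Conversely, if the excursion weight at `σ` is below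
  `1`, the weight of the paths from `x` that stop at `σ`, set to `1` at `x = σ`, is such an `h`.
* Comparing `h` with the absolute values of a left eigenvector bounds every real eigenvalue of `A`
  strictly by `α`. Conversely, if `α` exceeds every real eigenvalue, the column sums
  `1 ᵥ* resolvent A t` are positive for large `t`, and they stay positive as `t` decreases to `α`:
  a nonnegative solution of `u ᵥ* A = t • u - 1` cannot vanish anywhere. So `h` can be taken to be
  `1 ᵥ* resolvent A α`.
-/

section Sums

variable {β : Type*}

theorem tsum_list_eq_nil_add_tsum_cons (F : List β → ℝ≥0∞) :
    ∑' l, F l = F [] + ∑' b, ∑' l, F (b :: l) := by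
  let e : Unit ⊕ β × List β ≃ List β :=
    { toFun := Sum.elim (fun _ => []) fun p => p.1 :: p.2
      invFun := fun
        | [] => .inl ()
        | b :: l => .inr (b, l)
      left_inv := by rintro (_ | ⟨b, l⟩) <;> rfl
      right_inv := by rintro (_ | ⟨b, l⟩) <;> rfl }
  rw [← e.tsum_eq F, ENNReal.summable.tsum_sum ENNReal.summable, tsum_fintype,
    Fintype.sum_unique]
  exact congrArg (F [] + ·) (ENNReal.tsum_prod (f := fun b l => F (b :: l)))

theorem tsum_list_eq_iSup_tsum_length_lt (F : List β → ℝ≥0∞) :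
    ∑' l, F l = ⨆ n : ℕ, ∑' l, if l.length < n then F l else 0 := by
  refine le_antisymm ?_ (iSup_le fun n => ENNReal.tsum_le_tsum fun l => ?_)
  · rw [ENNReal.tsum_eq_iSup_sum]
    refine iSup_le fun s => le_iSup_of_le (s.sup List.length + 1) ?_
    refine (Finset.sum_le_sum fun l hl => ?_).trans (ENNReal.sum_le_tsum s)
    rw [if_pos (Nat.lt_succ_of_le (Finset.le_sup (f := List.length) hl))]
  · split_ifs <;> simp

theorem tsum_eq_add_tsum_ne (b : β) (F : β → ℝ≥0∞) :
    ∑' y, F y = F b + ∑' y : {y : β // y ≠ b}, F y := by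
  rw [← ENNReal.summable.tsum_add_tsum_compl (s := {b}) ENNReal.summable, tsum_singleton b F]
  rfl

end Sums

section HittingWeight

variable {V : Type*}

/-- Excursions from `σ` to `σ`, encoded by the list of their intermediate vertices. -/
def excursionEquiv (σ : V) : List {x : V // x ≠ σ} ≃ {l : List V // IsExcursion σ l} where
  toFun m := ⟨σ :: (m.map Subtype.val ++ [σ]), by simp, by simp, by simp [List.getLast?_cons], by
    simp only [List.tail_cons, List.dropLast_concat, List.mem_map]
    rintro _ ⟨y, -, rfl⟩
    exact y.2⟩
  invFun l := l.1.tail.dropLast.attachWith (· ≠ σ) l.2.2.2.2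
  left_inv m := Subtype.val_injective.list_map (by simp)
  right_inv := by
    rintro ⟨_ | ⟨a, _ | ⟨b, t⟩⟩, hlen, hhead, hlast, -⟩
    · simp at hlen
    · simp at hlen
    · obtain rfl : a = σ := by simpa using hhead
      have hend : (b :: t).getLast (by simp) = a := by
        simpa [List.getLast?_eq_some_getLast] using hlast
      have := List.dropLast_append_getLast (l := b :: t) (by simp)
      rw [hend] at this
      exact Subtype.ext (by simpa [List.attachWith_map_subtype_val] using this)

/-- The total weight of the paths from `x` that stop at their first visit to `σ` at a positive
time; a path is encoded by the list of its intermediate vertices. -/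
noncomputable def hittingWeight (w : V → V → ℝ) (σ x : V) : ℝ≥0∞ :=
  ∑' m : List {y : V // y ≠ σ}, pathWeight w (x :: (m.map Subtype.val ++ [σ]))

theorem hittingWeight_eq_tsum_mul_update [DecidableEq V] (w : V → V → ℝ) (σ x : V) :
    hittingWeight w σ x =
      ∑' y, ENNReal.ofReal (w x y) * Function.update (hittingWeight w σ) σ 1 y := by
  have hne (y : {y : V // y ≠ σ}) :
      Function.update (hittingWeight w σ) σ 1 y = hittingWeight w σ y :=
    Function.update_of_ne y.2 ..
  rw [tsum_eq_add_tsum_ne σ, hittingWeight, tsum_list_eq_nil_add_tsum_cons]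
  simp only [hne, Function.update_self, hittingWeight, List.map_nil, List.map_cons,
    List.nil_append, List.cons_append, pathWeight, mul_one, ENNReal.tsum_mul_left]

variable {w : V → V → ℝ} {H : V → ℝ≥0∞}

theorem tsum_pathWeight_length_lt_mul_le (hH : ∀ x, ∑' y, ENNReal.ofReal (w x y) * H y ≤ H x)
    (σ : V) (n : ℕ) (x : V) :
    (∑' m : List {y : V // y ≠ σ},
      if m.length < n then pathWeight w (x :: (m.map Subtype.val ++ [σ])) else 0) * H σ ≤
        ∑' y, ENNReal.ofReal (w x y) * H y := by
  induction n generalizing x with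
  | zero => simp
  | succ n ih =>
    rw [tsum_list_eq_nil_add_tsum_cons, tsum_eq_add_tsum_ne σ, add_mul, ← ENNReal.tsum_mul_right]
    refine add_le_add (by simp [pathWeight]) (ENNReal.tsum_le_tsum fun y => ?_)
    calc
      _ = ENNReal.ofReal (w x y) * ((∑' m : List {y : V // y ≠ σ},
          if m.length < n then pathWeight w (y :: (m.map Subtype.val ++ [σ])) else 0) * H σ) := by
        simp only [← mul_assoc, ← ENNReal.tsum_mul_left, mul_ite, mul_zero, List.length_cons,
          Nat.add_lt_add_iff_right, List.map_cons, List.cons_append, pathWeight]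
      _ ≤ ENNReal.ofReal (w x y) * H y := by gcongr; exact (ih y).trans (hH y)

theorem hittingWeight_mul_le (hH : ∀ x, ∑' y, ENNReal.ofReal (w x y) * H y ≤ H x) (σ x : V) :
    hittingWeight w σ x * H σ ≤ ∑' y, ENNReal.ofReal (w x y) * H y := by
  rw [hittingWeight, tsum_list_eq_iSup_tsum_length_lt, ENNReal.iSup_mul]
  exact iSup_le fun n => tsum_pathWeight_length_lt_mul_le hH σ n x

end HittingWeight

section Resolvent

open scoped Matrix

variable {V R : Type*} [Fintype V] [DecidableEq V]

theorem vecMul_apply_eq_add_sum_erase [NonUnitalNonAssocSemiring R] (M : Matrix V V R) (u : V → R)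
    (x : V) : (u ᵥ* M) x = u x * M x x + ∑ y ∈ Finset.univ.erase x, u y * M y x :=
  (Finset.add_sum_erase _ _ (Finset.mem_univ x)).symm

theorem mem_spectrum_iff_exists_mulVec_eq [Field R] {M : Matrix V V R} {t : R} :
    t ∈ spectrum R M ↔ ∃ v ≠ 0, M *ᵥ v = t • v := by
  rw [spectrum.mem_iff, Matrix.isUnit_iff_isUnit_det, isUnit_iff_ne_zero, not_ne_iff,
    ← Matrix.exists_mulVec_eq_zero_iff]
  simp only [Algebra.algebraMap_eq_smul_one, Matrix.sub_mulVec, Matrix.smul_mulVec,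
    Matrix.one_mulVec, sub_eq_zero, eq_comm]

theorem mem_spectrum_iff_exists_vecMul_eq [Field R] {M : Matrix V V R} {t : R} :
    t ∈ spectrum R M ↔ ∃ v ≠ 0, v ᵥ* M = t • v := by
  rw [spectrum.mem_iff, Matrix.isUnit_iff_isUnit_det, isUnit_iff_ne_zero, not_ne_iff,
    ← Matrix.exists_vecMul_eq_zero_iff]
  simp only [Algebra.algebraMap_eq_smul_one, Matrix.vecMul_sub, Matrix.vecMul_smul,
    Matrix.vecMul_one, sub_eq_zero, eq_comm]

theorem vecMul_resolvent_vecMul [CommRing R] {M : Matrix V V R} {t : R}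
    (ht : t ∈ resolventSet R M) (b : V → R) :
    (b ᵥ* resolvent M t) ᵥ* M = t • (b ᵥ* resolvent M t) - b := by
  have hinv : resolvent M t * (algebraMap R _ t - M) = 1 := Ring.inverse_mul_cancel _ ht
  rw [Algebra.algebraMap_eq_smul_one, mul_sub, mul_smul_comm, mul_one, sub_eq_iff_eq_add,
    ← sub_eq_iff_eq_add'] at hinv
  rw [Matrix.vecMul_vecMul, ← hinv, Matrix.vecMul_sub, Matrix.vecMul_smul, Matrix.vecMul_one]

variable [Field R] [TopologicalSpace R]

theorem isOpen_resolventSet_matrix [IsTopologicalRing R] [T1Space R] (M : Matrix V V R) :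
    IsOpen (resolventSet R M) := by
  simp only [resolventSet, Matrix.isUnit_iff_isUnit_det, isUnit_iff_ne_zero,
    Matrix.algebraMap_eq_diagonal]
  exact isOpen_compl_singleton.preimage (by fun_prop)

theorem continuousAt_resolvent_matrix [IsTopologicalDivisionRing R] {M : Matrix V V R} {t : R}
    (ht : t ∈ resolventSet R M) : ContinuousAt (resolvent M) t := by
  have hdet : (algebraMap R (Matrix V V R) t - M).det ≠ 0 :=
    ((Matrix.isUnit_iff_isUnit_det _).1 ht).ne_zero
  have hcont : Continuous fun s : R => algebraMap R (Matrix V V R) s - M :=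
    (continuous_algebraMap R _).sub continuous_const
  unfold resolvent
  simp only [← Matrix.nonsing_inv_eq_ringInverse, Matrix.inv_def, Ring.inverse_eq_inv']
  exact (hcont.matrix_det.continuousAt.inv₀ hdet).smul hcont.matrix_adjugate.continuousAt

end Resolvent

section Metzler

open scoped Matrix

variable {V : Type*} {A : Matrix V V ℝ}

theorem forall_of_isIrreducibleMetzlerChain (hirr : A.IsIrreducibleMetzlerChain) {p : V → Prop}
    (hstep : ∀ x y, x ≠ y → 0 < A y x → p x → p y) {σ : V} (hσ : p σ) (x : V) : p x := by
  by_cases hx : σ = x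
  · exact hx ▸ hσ
  · induction hirr σ x hx with
    | single h => exact hstep _ _ h.1 h.2 hσ
    | @tail b c _ h ih =>
      by_cases hb : σ = b
      · exact hstep _ _ h.1 h.2 (hb ▸ hσ)
      · exact hstep _ _ h.1 h.2 (ih hb)

variable [Fintype V] {α t : ℝ} {h u z : V → ℝ}

theorem offDiag_mul_nonneg [DecidableEq V] (hM : A.IsMetzler) (hu : 0 ≤ u) {x y : V}
    (hy : y ∈ Finset.univ.erase x) : 0 ≤ u y * A y x :=
  mul_nonneg (hu y) (hM x y (Finset.ne_of_mem_erase hy).symm)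

theorem mul_diag_le_vecMul (hM : A.IsMetzler) (hu : 0 ≤ u) (x : V) :
    u x * A x x ≤ (u ᵥ* A) x := by
  classical
  rw [vecMul_apply_eq_add_sum_erase]
  exact le_add_of_nonneg_right (Finset.sum_nonneg fun _ => offDiag_mul_nonneg hM hu)

theorem pos_of_vecMul_lt (hM : A.IsMetzler) (hu : 0 ≤ u) {x : V} (hx : (u ᵥ* A) x < t * u x) :
    0 < u x := by
  refine (hu x).lt_of_ne' fun (h0 : u x = 0) => ?_
  have := mul_diag_le_vecMul hM hu x
  rw [h0] at hx this
  linarith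

/- The minimum principle: otherwise `u - c • z`, with `c ≤ 0` the minimum of `u / z`, is a
nonnegative vector contradicting `pos_of_vecMul_lt` at the minimizer. -/
theorem pos_of_vecMul_lt_of_pos_of_vecMul_le (hM : A.IsMetzler) (hz : ∀ x, 0 < z x)
    (hzt : z ᵥ* A ≤ t • z) (hut : ∀ x, (u ᵥ* A) x < t * u x) (x : V) : 0 < u x := by
  have : Nonempty V := ⟨x⟩
  obtain ⟨m, hm⟩ := Finite.exists_min fun y => u y / z y
  set c := u m / z m
  suffices hc : 0 < c from (div_pos_iff_of_pos_right (hz x)).1 (hc.trans_le (hm x))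
  by_contra! hc
  have hnonneg : 0 ≤ u - c • z := fun y => sub_nonneg.2 ((le_div_iff₀ (hz y)).1 (hm y))
  have hzero : (u - c • z) m = 0 := by simp [c, (hz m).ne']
  refine (pos_of_vecMul_lt (t := t) hM hnonneg ?_).ne' hzero
  have := mul_le_mul_of_nonpos_left (hzt m) hc
  simp only [Matrix.sub_vecMul, Matrix.smul_vecMul, Pi.sub_apply, Pi.smul_apply,
    smul_eq_mul] at this ⊢
  linarith [hut m]

theorem pos_of_vecMul_le_of_ne_zero (hM : A.IsMetzler) (hirr : A.IsIrreducibleMetzlerChain)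
    (hu : 0 ≤ u) (hut : u ᵥ* A ≤ t • u) (hne : u ≠ 0) (x : V) : 0 < u x := by
  classical
  refine (hu x).lt_of_ne' fun hx => hne <| funext <|
    forall_of_isIrreducibleMetzlerChain hirr (p := (u · = 0)) (fun y z hyz hA hy => ?_) hx
  have hy' := hut y
  rw [vecMul_apply_eq_add_sum_erase, Pi.smul_apply, hy, zero_mul, zero_add, smul_zero] at hy'
  have hle : u z * A z y ≤ 0 := (Finset.single_le_sum (fun _ => offDiag_mul_nonneg hM hu)
    (Finset.mem_erase.2 ⟨hyz.symm, Finset.mem_univ z⟩)).trans hy'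
  exact le_antisymm (nonpos_of_mul_nonpos_left hle hA) (hu z)

theorem mul_abs_le_abs_vecMul (hM : A.IsMetzler) {μ : ℝ} {v : V → ℝ} (hv : v ᵥ* A = μ • v)
    {x : V} (hx : A x x ≤ μ) : μ * |v x| ≤ (|v| ᵥ* A) x := by
  classical
  have hvx := congrFun hv x
  rw [vecMul_apply_eq_add_sum_erase, Pi.smul_apply, smul_eq_mul] at hvx
  have hsum : ∑ y ∈ Finset.univ.erase x, |v| y * A y x =
      ∑ y ∈ Finset.univ.erase x, |v y * A y x| :=
    Finset.sum_congr rfl fun y hy => by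
      rw [abs_mul, abs_of_nonneg (hM x y (Finset.ne_of_mem_erase hy).symm), Pi.abs_apply]
  have habs : (μ - A x x) * |v x| ≤ ∑ y ∈ Finset.univ.erase x, |v| y * A y x := by
    rw [hsum, ← abs_of_nonneg (sub_nonneg.2 hx), ← abs_mul]
    refine (congrArg abs ?_).trans_le (Finset.abs_sum_le_sum_abs _ _)
    linarith
  rw [vecMul_apply_eq_add_sum_erase, Pi.abs_apply]
  linarith

variable [DecidableEq V]

theorem isGreatest_spectrum_of_isPerronRoot {lam : ℝ} (hP : A.IsPerronRoot lam) :
    IsGreatest (spectrum ℝ A) lam := by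
  refine ⟨mem_spectrum_iff_exists_mulVec_eq.2 hP.1, fun t ht => ?_⟩
  obtain ⟨v, hv, hAv⟩ := mem_spectrum_iff_exists_mulVec_eq.1 ht
  refine hP.2 t ⟨fun x => v x, fun h0 => hv ?_, ?_⟩
  · exact funext fun x => Complex.ofReal_eq_zero.1 (congrFun h0 x)
  · funext x
    have := congrFun hAv x
    simp only [Pi.smul_apply, smul_eq_mul, Matrix.mulVec, dotProduct, Matrix.map_apply] at this ⊢
    exact_mod_cast this

theorem lt_of_mem_spectrum_of_pos_of_vecMul_lt (hM : A.IsMetzler)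
    (hirr : A.IsIrreducibleMetzlerChain) {μ : ℝ} (hμ : μ ∈ spectrum ℝ A) (hh : ∀ x, 0 < h x)
    (hα : h ᵥ* A < α • h) : μ < α := by
  by_contra! hαμ
  obtain ⟨v, hv, hvA⟩ := mem_spectrum_iff_exists_vecMul_eq.1 hμ
  obtain ⟨σ, hvσ⟩ := Function.ne_iff.1 hv
  have : Nonempty V := ⟨σ⟩
  have hdiag (x : V) : A x x ≤ μ := by
    refine le_trans (le_of_mul_le_mul_left ?_ (hh x)) hαμ
    exact ((mul_diag_le_vecMul hM (fun y => (hh y).le) x).trans (hα.le x)).trans_eq (mul_comm ..)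
  have habs : α • |v| ≤ |v| ᵥ* A := fun x =>
    (mul_le_mul_of_nonneg_right hαμ (abs_nonneg (v x))).trans
      (mul_abs_le_abs_vecMul hM hvA (hdiag x))
  obtain ⟨m, hm⟩ := Finite.exists_max fun y => |v y| / h y
  set c := |v m| / h m with hc_def
  have hc : 0 < c := (div_pos (abs_pos.2 hvσ) (hh σ)).trans_le (hm σ)
  have hu : 0 ≤ c • h - |v| := fun y => sub_nonneg.2 ((div_le_iff₀ (hh y)).1 (hm y))
  have huA : (c • h - |v|) ᵥ* A ≤ α • (c • h - |v|) := by
    rw [Matrix.sub_vecMul, Matrix.smul_vecMul, smul_sub, smul_comm]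
    exact sub_le_sub (smul_le_smul_of_nonneg_left hα.le hc.le) habs
  have hv_eq : c • h = |v| := by
    by_contra hne
    refine (pos_of_vecMul_le_of_ne_zero hM hirr hu huA (sub_ne_zero.2 hne) m).ne' ?_
    simp [hc_def, (hh m).ne']
  rw [← hv_eq, Matrix.smul_vecMul, smul_comm] at habs
  exact hα.not_ge ((smul_le_smul_iff_of_pos_left hc).1 habs)

theorem one_vecMul_resolvent_pos (hM : A.IsMetzler) (ht : Set.Ici t ⊆ resolventSet ℝ A) (x : V) :
    0 < (1 ᵥ* resolvent A t) x := by
  let u : ℝ → V → ℝ := fun s => 1 ᵥ* resolvent A s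
  have hlt {s : ℝ} (hs : s ∈ Set.Ici t) (y : V) : (u s ᵥ* A) y < s * u s y := by
    simp [u, vecMul_resolvent_vecMul (ht hs)]
  have hcont {s : ℝ} (hs : s ∈ resolventSet ℝ A) : ContinuousAt u s :=
    (continuous_const.matrix_vecMul continuous_id).continuousAt.comp
      (continuousAt_resolvent_matrix hs)
  let P : Set ℝ := resolventSet ℝ A ∩ u ⁻¹' {v | ∀ y, 0 < v y}
  have hP : IsOpen P := by
    refine ContinuousOn.isOpen_inter_preimage (fun s hs => (hcont hs).continuousWithinAt)
      (isOpen_resolventSet_matrix A) ?_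
    simp only [Set.ofPred_forall]
    exact isOpen_iInter_of_finite fun y => isOpen_lt continuous_const (continuous_apply y)
  suffices h : Set.Ici t ⊆ P from (h Set.self_mem_Ici).2 x
  refine isPreconnected_Ici.subset_of_closure_inter_subset hP ?_ ?_
  · obtain ⟨s, hs⟩ := (Set.finite_range (1 ᵥ* A)).bddAbove
    have hmax : max s t ∈ Set.Ici t := le_max_right s t
    refine ⟨max s t, hmax, ht hmax, pos_of_vecMul_lt_of_pos_of_vecMul_le hM (z := 1)
      (fun _ => one_pos) (fun y => ?_) (hlt hmax)⟩
    simpa using Or.inl (hs (Set.mem_range_self y))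
  · rintro s ⟨hsP, hst⟩
    have hnonneg : 0 ≤ u s := ge_of_tendsto_of_frequently (hcont (ht hst))
      ((mem_closure_iff_frequently.1 hsP).mono fun r hr y => (hr.2 y).le)
    exact ⟨ht hst, fun y => pos_of_vecMul_lt hM hnonneg (hlt hst y)⟩

end Metzler

section Transition

open scoped Matrix

variable {V : Type*} {A : Matrix V V ℝ} {α : ℝ}

/-- The transition weight `w(α)_{x→y}`. -/
noncomputable def transitionWeight (A : Matrix V V ℝ) (α : ℝ) (x y : V) : ℝ :=
  A y x / (α - A x x)

theorem excursionWeight_eq_hittingWeight (A : Matrix V V ℝ) (α : ℝ) (σ : V) :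
    excursionWeight A α σ = hittingWeight (transitionWeight A α) σ σ :=
  ((excursionEquiv σ).tsum_eq fun l => pathWeight (transitionWeight A α) l.1).symm

theorem ne_top_of_tsum_transitionWeight_mul_le (hirr : A.IsIrreducibleMetzlerChain)
    (hα : ∀ x, A x x < α) {H : V → ℝ≥0∞}
    (hH : ∀ x, ∑' y, ENNReal.ofReal (transitionWeight A α x y) * H y ≤ H x) {σ : V}
    (hσ : H σ ≠ ∞) (x : V) : H x ≠ ∞ := by
  refine forall_of_isIrreducibleMetzlerChain hirr (p := (H · ≠ ∞))
    (fun a b _ hA ha hb => ha ?_) hσ x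
  have hw : 0 < ENNReal.ofReal (transitionWeight A α a b) :=
    ENNReal.ofReal_pos.2 (div_pos hA (sub_pos.2 (hα a)))
  rw [← top_le_iff, ← ENNReal.mul_top hw.ne', ← hb]
  exact (ENNReal.le_tsum b).trans (hH a)

variable [Fintype V] {h : V → ℝ} {x : V}

/- `ENNReal.ofReal` truncates the nonpositive weight `w(α)_{x→x}` to `0`, which removes the
diagonal term. -/
theorem tsum_transitionWeight_mul (hM : A.IsMetzler) (hx : A x x ≤ 0) (hα : A x x < α)
    (hh : 0 ≤ h) :
    ∑' y, ENNReal.ofReal (transitionWeight A α x y) * ENNReal.ofReal (h y) =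
      ENNReal.ofReal (((h ᵥ* A) x - h x * A x x) / (α - A x x)) := by
  classical
  have hden : 0 < α - A x x := sub_pos.2 hα
  rw [vecMul_apply_eq_add_sum_erase, add_sub_cancel_left, Finset.sum_div,
    ENNReal.ofReal_sum_of_nonneg fun y hy => div_nonneg (offDiag_mul_nonneg hM hh hy) hden.le,
    tsum_fintype, ← Finset.add_sum_erase _ _ (Finset.mem_univ x), transitionWeight,
    ENNReal.ofReal_of_nonpos (div_nonpos_of_nonpos_of_nonneg hx hden.le), zero_mul, zero_add]
  refine Finset.sum_congr rfl fun y _ => ?_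
  rw [← ENNReal.ofReal_mul' (hh y), transitionWeight, div_mul_eq_mul_div, mul_comm (A y x)]

theorem tsum_transitionWeight_mul_le_iff (hM : A.IsMetzler) (hx : A x x ≤ 0) (hα : A x x < α)
    (hh : 0 ≤ h) :
    ∑' y, ENNReal.ofReal (transitionWeight A α x y) * ENNReal.ofReal (h y) ≤
      ENNReal.ofReal (h x) ↔ (h ᵥ* A) x ≤ α * h x := by
  rw [tsum_transitionWeight_mul hM hx hα hh, ENNReal.ofReal_le_ofReal_iff (hh x),
    div_le_iff₀ (sub_pos.2 hα), mul_sub, sub_le_sub_iff_right, mul_comm]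

theorem tsum_transitionWeight_mul_lt_iff (hM : A.IsMetzler) (hx : A x x ≤ 0) (hα : A x x < α)
    (hh : 0 ≤ h) (hpos : 0 < h x) :
    ∑' y, ENNReal.ofReal (transitionWeight A α x y) * ENNReal.ofReal (h y) <
      ENNReal.ofReal (h x) ↔ (h ᵥ* A) x < α * h x := by
  rw [tsum_transitionWeight_mul hM hx hα hh, ENNReal.ofReal_lt_ofReal_iff hpos,
    div_lt_iff₀ (sub_pos.2 hα), mul_sub, sub_lt_sub_iff_right, mul_comm]

theorem excursionWeight_lt_one_of_vecMul_lt (hM : A.IsMetzler) (hdiag : ∀ x, A x x ≤ 0)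
    (hα : ∀ x, A x x < α) (hh : 0 ≤ h) (hle : h ᵥ* A ≤ α • h) {σ : V}
    (hσ : (h ᵥ* A) σ < α * h σ) : excursionWeight A α σ < 1 := by
  rw [excursionWeight_eq_hittingWeight]
  by_contra! hone
  refine (lt_self_iff_false (ENNReal.ofReal (h σ))).1 ?_
  calc
    ENNReal.ofReal (h σ)
      ≤ hittingWeight (transitionWeight A α) σ σ * ENNReal.ofReal (h σ) :=
        le_mul_of_one_le_left' hone
    _ ≤ ∑' y, ENNReal.ofReal (transitionWeight A α σ y) * ENNReal.ofReal (h y) :=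
        hittingWeight_mul_le (H := fun x => ENNReal.ofReal (h x)) (fun x =>
          (tsum_transitionWeight_mul_le_iff hM (hdiag x) (hα x) hh).2 (hle x)) σ σ
    _ < ENNReal.ofReal (h σ) := (tsum_transitionWeight_mul_lt_iff hM (hdiag σ) (hα σ) hh
        (pos_of_vecMul_lt hM hh hσ)).2 hσ

theorem exists_pos_vecMul_lt_of_excursionWeight_lt_one (hM : A.IsMetzler)
    (hdiag : ∀ x, A x x ≤ 0) (hirr : A.IsIrreducibleMetzlerChain) (hα : ∀ x, A x x < α) {σ : V}
    (hσ : excursionWeight A α σ < 1) : ∃ h : V → ℝ, (∀ x, 0 < h x) ∧ h ᵥ* A < α • h := by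
  classical
  rw [excursionWeight_eq_hittingWeight] at hσ
  let H : V → ℝ≥0∞ := Function.update (hittingWeight (transitionWeight A α) σ) σ 1
  have hHσ : H σ = 1 := Function.update_self ..
  have hsum (x : V) : ∑' y, ENNReal.ofReal (transitionWeight A α x y) * H y =
      hittingWeight (transitionWeight A α) σ x := (hittingWeight_eq_tsum_mul_update ..).symm
  have hsuper (x : V) : ∑' y, ENNReal.ofReal (transitionWeight A α x y) * H y ≤ H x := by
    rw [hsum]
    obtain rfl | hx := eq_or_ne x σ
    · exact hσ.le.trans_eq hHσ.symm
    · exact (Function.update_of_ne hx ..).ge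
  have hfin := ne_top_of_tsum_transitionWeight_mul_le hirr hα hsuper (hHσ ▸ ENNReal.one_ne_top)
  let h : V → ℝ := fun x => (H x).toReal
  have hofReal (x : V) : H x = ENNReal.ofReal (h x) := (ENNReal.ofReal_toReal (hfin x)).symm
  have hh : 0 ≤ h := fun x => ENNReal.toReal_nonneg
  have hhσ : h σ = 1 := by simp [h, hHσ]
  simp only [hofReal] at hsuper hsum
  have hle : h ᵥ* A ≤ α • h := fun x =>
    (tsum_transitionWeight_mul_le_iff hM (hdiag x) (hα x) hh).1 (hsuper x)
  have hlt : (h ᵥ* A) σ < α * h σ := by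
    rw [← tsum_transitionWeight_mul_lt_iff hM (hdiag σ) (hα σ) hh (hhσ ▸ one_pos), hsum]
    simpa [hhσ] using hσ
  refine ⟨h, pos_of_vecMul_le_of_ne_zero hM hirr hh hle fun h0 => ?_, hle, fun hge => ?_⟩
  · simp [h0] at hhσ
  · exact hlt.not_ge (hge σ)

end Transition

theorem resolvent_formula_general {V : Type*} [Fintype V] [DecidableEq V] (A : Matrix V V ℝ)
    (lam : ℝ) (hMetzler : A.IsMetzler) (hdiag : ∀ σ, A σ σ ≤ 0)
    (hirr : A.IsIrreducibleMetzlerChain) (hlam : IsGreatest (spectrum ℝ A) lam) (α : ℝ)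
    (hα : ∀ σ, A σ σ < α) :
    (α ≤ lam ↔ ∃ σ : V, 1 ≤ excursionWeight A α σ) ∧
      (α ≤ lam ↔ ∀ σ : V, 1 ≤ excursionWeight A α σ) := by
  have hforall (hle : α ≤ lam) (σ : V) : 1 ≤ excursionWeight A α σ := by
    by_contra! hσ
    obtain ⟨h, hpos, hlt⟩ :=
      exists_pos_vecMul_lt_of_excursionWeight_lt_one hMetzler hdiag hirr hα hσ
    exact (lt_of_mem_spectrum_of_pos_of_vecMul_lt hMetzler hirr hlam.1 hpos hlt).not_ge hle
  have hexists : (∃ σ : V, 1 ≤ excursionWeight A α σ) → α ≤ lam := by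
    rintro ⟨σ, hσ⟩
    by_contra! hlt
    have hres : Set.Ici α ⊆ resolventSet ℝ A := fun t ht =>
      not_not.1 fun hmem => (hlt.trans_le ht).not_ge (hlam.2 hmem)
    have hpos := one_vecMul_resolvent_pos hMetzler hres
    have hsol := vecMul_resolvent_vecMul (hres Set.self_mem_Ici) 1
    refine hσ.not_gt (excursionWeight_lt_one_of_vecMul_lt hMetzler hdiag hα
      (fun x => (hpos x).le) (hsol.trans_le (sub_le_self _ zero_le_one)) ?_)
    simp [hsol]
  obtain ⟨v, hv, -⟩ := mem_spectrum_iff_exists_mulVec_eq.1 hlam.1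
  obtain ⟨σ, -⟩ := Function.ne_iff.1 hv
  exact ⟨⟨fun hle => ⟨σ, hforall hle σ⟩, hexists⟩, ⟨hforall, fun h => hexists ⟨σ, h σ⟩⟩⟩

/-- **Resolvent Formula.** For an irreducible Metzler matrix `A` with
nonpositive diagonal and Perron root `lam`, and every `α > 0`:
`lam ≥ α` iff the excursion weight `f(α)_{σ→σ}` is `≥ 1` for some `σ`,
iff it is `≥ 1` for every `σ`. -/
theorem resolvent_formula {V : Type*} [Fintype V] [DecidableEq V] [Nonempty V]
    (A : Matrix V V ℝ) (lam : ℝ)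
    (hMetzler : A.IsMetzler) (hdiag : ∀ σ, A σ σ ≤ 0)
    (hirr : A.IsIrreducibleMetzlerChain) (hPerron : A.IsPerronRoot lam) :
    ∀ α : ℝ, 0 < α →
      ((α ≤ lam ↔ ∃ σ : V, 1 ≤ excursionWeight A α σ) ∧
       (α ≤ lam ↔ ∀ σ : V, 1 ≤ excursionWeight A α σ)) := fun α hα =>
  resolvent_formula_general A lam hMetzler hdiag hirr
    (isGreatest_spectrum_of_isPerronRoot hPerron) α fun σ => (hdiag σ).trans_lt hα
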